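/- Let n ≥ 2 be an integer, let γ ⊆ {1,…,n} have cardinality k with 1 ≤ k ≤ n−1, and let 0 < σ²_min < σ²_max. For c ∈ ℝⁿ whose maximum likelihood estimates σ̂_I² = S_γ(c)/k and σ̂_N² = (S(c) − S_γ(c))/(n−k) both lie in [σ²_min, σ²_max], the normalized maximum likelihood density f_nml(c) — defined as the maximized likelihood Π_{i∈γ} φ(c_i; 0, σ̂_I²) Π_{i∉γ} φ(c_i; 0, σ̂_N²) divided by its integral over the region R = {c′ ∈ ℝⁿ : σ²_min ≤ S_γ(c′)/k ≤ σ²_max, σ²_min ≤ (S(c′) − S_γ(c′))/(n−k) ≤ σ²_max} — equals f_nml(c) = Γ(k/2) Γ((n−k)/2) / (π^{n/2} · S_γ(c)^{k/2} · (S(c) − S_γ(c))^{(n−k)/2}) · (ln(σ²_max/σ²_min))^{−2}. -/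

import Mathlib

/-! Write `S` for the sum of squares of a group of `m` coefficients. The maximized likelihood of the
group is `(2πe S / m) ^ (-m / 2)`, so it depends on the coefficients only through `S`, and the
joint maximized likelihood is the product over the two complementary groups. As the region of
integration is a product as well, Fubini reduces the normalizing integral to one group at a time.
There, the law of `S` under Lebesgue measure has density `π ^ (m / 2) / Γ(m / 2) * S ^ (m / 2 - 1)`,
against which `S ^ (-m / 2)` leaves the integrand `S⁻¹`, hence the factor
`log (σ²_max / σ²_min)`. -/

open MeasureTheory Real Finset

/-- `Sg γ c = ∑_{i ∈ γ} c_i²`. -/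
noncomputable def Sg {n : ℕ} (γ : Finset (Fin n)) (c : Fin n → ℝ) : ℝ :=
  ∑ i ∈ γ, (c i) ^ 2

/-- `Stot c = ∑_{i=1}^n c_i²`. -/
noncomputable def Stot {n : ℕ} (c : Fin n → ℝ) : ℝ :=
  ∑ i, (c i) ^ 2

/-- Centered Gaussian density `φ(x; 0, σ²) = (2πσ²)^{-1/2} exp(-x²/(2σ²))`. -/
noncomputable def gauss (x σ2 : ℝ) : ℝ :=
  (2 * Real.pi * σ2) ^ (-(1 : ℝ) / 2) * Real.exp (-(x ^ 2) / (2 * σ2))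

/-- The maximized likelihood of `c` under the extended model with retained set `γ`. -/
noncomputable def maxLik {n : ℕ} (γ : Finset (Fin n)) (c : Fin n → ℝ) : ℝ :=
  (∏ i ∈ γ, gauss (c i) (Sg γ c / γ.card)) *
    ∏ i ∈ γᶜ, gauss (c i) ((Stot c - Sg γ c) / ((n : ℝ) - γ.card))

section SumSq

variable {ι F : Type*} [Fintype ι] [NormedAddCommGroup F] [NormedSpace ℝ F]

lemma two_smul_integral_Ioi_pow_smul_sq {m : ℕ} (hm : m ≠ 0) (f : ℝ → F) :
    (2 : ℝ) • ∫ y in Set.Ioi (0 : ℝ), y ^ (m - 1) • f (y ^ 2)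
      = ∫ r in Set.Ioi (0 : ℝ), r ^ ((m : ℝ) / 2 - 1) • f r := by
  rw [← integral_smul,
    ← integral_comp_rpow_Ioi_of_pos (g := fun r ↦ r ^ ((m : ℝ) / 2 - 1) • f r) two_pos]
  refine setIntegral_congr_fun measurableSet_Ioi fun y hy ↦ ?_
  have hy' : (0 : ℝ) ≤ y := le_of_lt hy
  have hpow : y ^ (m - 1) = y ^ ((2 : ℝ) - 1) * (y ^ (2 : ℝ)) ^ ((m : ℝ) / 2 - 1) := by
    rw [← rpow_mul hy', ← rpow_add hy, ← rpow_natCast, Nat.cast_sub (by lia)]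
    congr 1
    push_cast
    ring
  simp only [hpow, smul_smul, mul_assoc, rpow_two]

lemma integral_fun_sum_sq [Nonempty ι] (f : ℝ → F) :
    ∫ x : ι → ℝ, f (∑ i, x i ^ 2)
      = (π ^ ((Fintype.card ι : ℝ) / 2) / Gamma ((Fintype.card ι : ℝ) / 2)) •
        ∫ r in Set.Ioi (0 : ℝ), r ^ ((Fintype.card ι : ℝ) / 2 - 1) • f r := by
  set m := Fintype.card ι with hm
  have hm0 : m ≠ 0 := Fintype.card_ne_zero
  have hEuclidean : ∫ x : ι → ℝ, f (∑ i, x i ^ 2) = ∫ x : EuclideanSpace ℝ ι, f (‖x‖ ^ 2) := by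
    rw [← (EuclideanSpace.volume_preserving_symm_measurableEquiv_toLp ι).integral_comp
      (MeasurableEquiv.measurableEmbedding _)]
    simp [EuclideanSpace.norm_sq_eq]
  have hball : volume.real (Metric.ball (0 : EuclideanSpace ℝ ι) 1)
      = π ^ ((m : ℝ) / 2) / Gamma ((m : ℝ) / 2 + 1) := by
    have hsqrt : √π ^ m = π ^ ((m : ℝ) / 2) := by
      rw [sqrt_eq_rpow, ← rpow_mul_natCast pi_pos.le, one_div_mul_eq_div]
    rw [Measure.real, EuclideanSpace.volume_ball, ENNReal.ofReal_one, one_pow, one_mul, ← hm, hsqrt,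
      ENNReal.toReal_ofReal (by positivity)]
  rw [hEuclidean, integral_fun_norm_addHaar volume fun r ↦ f (r ^ 2), finrank_euclideanSpace, ← hm,
    hball, ← two_smul_integral_Ioi_pow_smul_sq hm0, Gamma_add_one (by positivity),
    ← Nat.cast_smul_eq_nsmul ℝ, smul_smul, smul_smul]
  congr 1
  field_simp

lemma setIntegral_fun_sum_sq [Nonempty ι] {s : Set ℝ} (hs : MeasurableSet s) (f : ℝ → F) :
    ∫ x in {x : ι → ℝ | ∑ i, x i ^ 2 ∈ s}, f (∑ i, x i ^ 2)
      = (π ^ ((Fintype.card ι : ℝ) / 2) / Gamma ((Fintype.card ι : ℝ) / 2)) •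
        ∫ r in Set.Ioi 0 ∩ s, r ^ ((Fintype.card ι : ℝ) / 2 - 1) • f r := by
  have hmeas : MeasurableSet {x : ι → ℝ | ∑ i, x i ^ 2 ∈ s} :=
    hs.preimage (f := fun x : ι → ℝ ↦ ∑ i, x i ^ 2) (by fun_prop)
  rw [← integral_indicator hmeas, ← setIntegral_indicator hs]
  simp only [Set.indicator_smul]
  exact integral_fun_sum_sq (s.indicator f)

lemma setIntegral_mul_sum_sq_compl [DecidableEq ι] {𝕜 : Type*} [RCLike 𝕜] (γ : Finset ι)
    (f g : ℝ → 𝕜) (s t : Set ℝ) :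
    ∫ x in {x : ι → ℝ | ∑ i ∈ γ, x i ^ 2 ∈ s ∧ ∑ i ∈ γᶜ, x i ^ 2 ∈ t},
        f (∑ i ∈ γ, x i ^ 2) * g (∑ i ∈ γᶜ, x i ^ 2)
      = (∫ y in {y : {i // i ∈ γ} → ℝ | ∑ i, y i ^ 2 ∈ s}, f (∑ i, y i ^ 2)) *
        ∫ z in {z : {i // i ∉ γ} → ℝ | ∑ i, z i ^ 2 ∈ t}, g (∑ i, z i ^ 2) := by
  have hγ (x : ι → ℝ) : ∑ i ∈ γ, x i ^ 2 = ∑ i : {i // i ∈ γ}, x i ^ 2 :=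
    sum_subtype γ (fun _ ↦ Iff.rfl) _
  have hγc (x : ι → ℝ) : ∑ i ∈ γᶜ, x i ^ 2 = ∑ i : {i // i ∉ γ}, x i ^ 2 :=
    sum_subtype γᶜ (fun _ ↦ mem_compl) _
  simp only [hγ, hγc]
  rw [← setIntegral_prod_mul, ← Measure.volume_eq_prod]
  -- The two sides carry different `Fintype` instances on `{i // i ∈ γ}`.
  convert! (volume_preserving_piEquivPiSubtypeProd (fun _ : ι ↦ ℝ) (· ∈ γ)).setIntegral_preimage_emb
    (MeasurableEquiv.measurableEmbedding _) (fun p ↦ f (∑ i, p.1 i ^ 2) * g (∑ i, p.2 i ^ 2))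
    ({y | ∑ i, y i ^ 2 ∈ s} ×ˢ {z | ∑ i, z i ^ 2 ∈ t})

end SumSq

/-- The likelihood of `m` independent centered Gaussian observations with sum of squares `S`,
maximized over their common variance; the maximizer is `S / m`. When `S = 0 < m` the
likelihood is unbounded and the value here is `0`. -/
noncomputable def profileLik (m : ℕ) (S : ℝ) : ℝ :=
  (2 * π * exp 1 * (S / m)) ^ (-((m : ℝ) / 2))

lemma profileLik_eq_const_mul_rpow (m : ℕ) {S : ℝ} (hS : 0 ≤ S) :
    profileLik m S = (2 * π * exp 1 / m) ^ (-((m : ℝ) / 2)) * S ^ (-((m : ℝ) / 2)) := by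
  rw [profileLik, ← mul_rpow (by positivity) hS, mul_div_left_comm, mul_comm S]

lemma setIntegral_profileLik {ι : Type*} [Fintype ι] [Nonempty ι] {m : ℕ}
    (hm : Fintype.card ι = m) {a b : ℝ} (ha : 0 < a) (hab : a ≤ b) :
    ∫ x in {x : ι → ℝ | (∑ i, x i ^ 2) / m ∈ Set.Icc a b}, profileLik m (∑ i, x i ^ 2)
      = (2 * π * exp 1 / m) ^ (-((m : ℝ) / 2)) *
        (π ^ ((m : ℝ) / 2) / Gamma ((m : ℝ) / 2) * log (b / a)) := by
  have hm0 : (0 : ℝ) < m := by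
    rw [← hm]
    exact_mod_cast Fintype.card_pos
  have ham : 0 < a * m := by positivity
  have hdom : Set.Ioi 0 ∩ {r : ℝ | r / m ∈ Set.Icc a b} = Set.Icc (a * m) (b * m) := by
    ext r
    simp only [Set.mem_inter_iff, Set.mem_Ioi, Set.mem_ofPred_eq, Set.mem_Icc, le_div_iff₀ hm0,
      div_le_iff₀ hm0]
    exact and_iff_right_of_imp fun h ↦ ham.trans_le h.1
  have hintegrand : Set.EqOn (fun r : ℝ ↦ r ^ ((m : ℝ) / 2 - 1) • profileLik m r)
      (fun r ↦ (2 * π * exp 1 / m) ^ (-((m : ℝ) / 2)) * r⁻¹) (Set.Icc (a * m) (b * m)) := by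
    intro r hr
    have hr0 : 0 < r := ham.trans_le hr.1
    have hcancel : r ^ ((m : ℝ) / 2 - 1) * r ^ (-((m : ℝ) / 2)) = r⁻¹ := by
      rw [← rpow_add hr0, ← rpow_neg_one]
      ring_nf
    simp only [smul_eq_mul, profileLik_eq_const_mul_rpow m hr0.le, ← hcancel]
    ring
  have hlog : ∫ r in Set.Icc (a * m) (b * m), r⁻¹ = log (b / a) := by
    rw [integral_Icc_eq_integral_Ioc, ← intervalIntegral.integral_of_le (by gcongr),
      integral_inv_of_pos ham (ham.trans_le (by gcongr)), mul_div_mul_right _ _ hm0.ne']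
  have hmeas : MeasurableSet {r : ℝ | r / m ∈ Set.Icc a b} :=
    measurableSet_Icc.preimage (measurable_id.div_const _)
  refine (setIntegral_fun_sum_sq hmeas (profileLik m)).trans ?_
  rw [hm, hdom, setIntegral_congr_fun measurableSet_Icc hintegrand, integral_const_mul, hlog,
    smul_eq_mul, mul_left_comm]

lemma profileLik_div_normalizer {m : ℕ} (hm : m ≠ 0) {S : ℝ} (hS : 0 < S) (L : ℝ) :
    profileLik m S /
        ((2 * π * exp 1 / m) ^ (-((m : ℝ) / 2)) * (π ^ ((m : ℝ) / 2) / Gamma ((m : ℝ) / 2) * L))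
      = Gamma ((m : ℝ) / 2) / (π ^ ((m : ℝ) / 2) * S ^ ((m : ℝ) / 2)) * L⁻¹ := by
  have hconst : (0 : ℝ) < (2 * π * exp 1 / m) ^ (-((m : ℝ) / 2)) := by positivity
  rw [profileLik_eq_const_mul_rpow m hS.le, mul_div_mul_left _ _ hconst.ne', rpow_neg hS.le]
  field_simp

section MaxLik

variable {n : ℕ} (γ : Finset (Fin n)) (c : Fin n → ℝ)

lemma Sg_nonneg : 0 ≤ Sg γ c :=
  sum_nonneg fun _ _ ↦ sq_nonneg _

lemma Stot_sub_Sg : Stot c - Sg γ c = Sg γᶜ c :=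
  sub_eq_of_eq_add' (sum_add_sum_compl γ _).symm

lemma natCast_sub_card : (n : ℝ) - #γ = #γᶜ := by
  rw [sub_eq_iff_eq_add', ← Nat.cast_add, card_add_card_compl, Fintype.card_fin]

lemma prod_gauss_Sg_div_card : ∏ i ∈ γ, gauss (c i) (Sg γ c / #γ) = profileLik #γ (Sg γ c) := by
  rcases γ.eq_empty_or_nonempty with rfl | hγ
  · simp [profileLik]
  have hcard : (#γ : ℝ) ≠ 0 := by exact_mod_cast hγ.card_ne_zero
  rcases (Sg_nonneg γ c).eq_or_lt' with hS | hS
  · -- At zero variance both sides vanish, since `0 ^ y = 0` for real `y ≠ 0`.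
    simp [gauss, profileLik, hS, hγ.card_ne_zero]
  have hexponent : ∑ i ∈ γ, -c i ^ 2 / (2 * (Sg γ c / #γ)) = -((#γ : ℝ) / 2) := by
    rw [← sum_div, sum_neg_distrib, ← Sg]
    field_simp
  simp only [gauss, profileLik]
  rw [prod_mul_distrib, prod_const, ← exp_sum, hexponent, ← rpow_mul_natCast (by positivity),
    mul_right_comm _ (exp 1), mul_rpow (by positivity) (exp_pos 1).le, exp_one_rpow]
  ring_nf

lemma maxLik_eq_profileLik_mul :
    maxLik γ c = profileLik #γ (Sg γ c) * profileLik #γᶜ (Sg γᶜ c) := by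
  rw [maxLik, Stot_sub_Sg, natCast_sub_card, prod_gauss_Sg_div_card, prod_gauss_Sg_div_card]

lemma setIntegral_maxLik (hγ : γ.Nonempty) (hγc : γᶜ.Nonempty) {a b a' b' : ℝ}
    (ha : 0 < a) (hab : a ≤ b) (ha' : 0 < a') (hab' : a' ≤ b') :
    ∫ c in {c | Sg γ c / #γ ∈ Set.Icc a b ∧ Sg γᶜ c / #γᶜ ∈ Set.Icc a' b'}, maxLik γ c
      = ((2 * π * exp 1 / #γ) ^ (-((#γ : ℝ) / 2)) *
          (π ^ ((#γ : ℝ) / 2) / Gamma ((#γ : ℝ) / 2) * log (b / a))) *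
        ((2 * π * exp 1 / #γᶜ) ^ (-((#γᶜ : ℝ) / 2)) *
          (π ^ ((#γᶜ : ℝ) / 2) / Gamma ((#γᶜ : ℝ) / 2) * log (b' / a'))) := by
  have : Nonempty {i // i ∈ γ} := hγ.to_subtype
  have : Nonempty {i // i ∉ γ} := hγc.elim fun i hi ↦ ⟨i, mem_compl.1 hi⟩
  have hcardc : Fintype.card {i // i ∉ γ} = #γᶜ := Fintype.card_of_subtype _ fun _ ↦ mem_compl
  rw [← setIntegral_profileLik (Fintype.card_coe γ) ha hab,
    ← setIntegral_profileLik hcardc ha' hab']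
  simp only [maxLik_eq_profileLik_mul]
  exact setIntegral_mul_sum_sq_compl γ (profileLik #γ) (profileLik #γᶜ)
    {r | r / #γ ∈ Set.Icc a b} {r | r / #γᶜ ∈ Set.Icc a' b'}

theorem stmt_9_general (hI : 0 < Sg γ c) (hN : 0 < Stot c - Sg γ c) {a b a' b' : ℝ}
    (ha : 0 < a) (hab : a < b) (ha' : 0 < a') (hab' : a' < b') :
    maxLik γ c /
      (∫ c' in {c' : Fin n → ℝ | Sg γ c' / #γ ∈ Set.Icc a b ∧
          (Stot c' - Sg γ c') / ((n : ℝ) - #γ) ∈ Set.Icc a' b'},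
        maxLik γ c')
    = Gamma ((#γ : ℝ) / 2) * Gamma (((n : ℝ) - #γ) / 2) /
        (π ^ ((n : ℝ) / 2) * Sg γ c ^ ((#γ : ℝ) / 2) *
          (Stot c - Sg γ c) ^ (((n : ℝ) - #γ) / 2)) *
        (log (b / a) * log (b' / a'))⁻¹ := by
  have hπ : π ^ ((n : ℝ) / 2) = π ^ ((#γ : ℝ) / 2) * π ^ ((#γᶜ : ℝ) / 2) := by
    rw [← rpow_add pi_pos, ← natCast_sub_card]
    ring_nf
  simp only [Stot_sub_Sg, natCast_sub_card] at hN ⊢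
  have hγ : γ.Nonempty := nonempty_of_sum_ne_zero hI.ne'
  have hγc : γᶜ.Nonempty := nonempty_of_sum_ne_zero hN.ne'
  rw [setIntegral_maxLik γ hγ hγc ha hab.le ha' hab'.le, maxLik_eq_profileLik_mul, mul_div_mul_comm,
    profileLik_div_normalizer hγ.card_ne_zero hI, profileLik_div_normalizer hγc.card_ne_zero hN, hπ]
  ring

end MaxLik

theorem stmt_9 (n k : ℕ) (hn : 2 ≤ n) (γ : Finset (Fin n)) (hγ : γ.card = k)
    (hk1 : 1 ≤ k) (hk2 : k ≤ n - 1) (σmin σmax : ℝ) (h0 : 0 < σmin) (hσ : σmin < σmax)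
    (c : Fin n → ℝ)
    (hI : Sg γ c / k ∈ Set.Icc σmin σmax)
    (hN : (Stot c - Sg γ c) / ((n : ℝ) - k) ∈ Set.Icc σmin σmax) :
    maxLik γ c /
      (∫ c' in {c' : Fin n → ℝ |
          σmin ≤ Sg γ c' / k ∧ Sg γ c' / k ≤ σmax ∧
          σmin ≤ (Stot c' - Sg γ c') / ((n : ℝ) - k) ∧
          (Stot c' - Sg γ c') / ((n : ℝ) - k) ≤ σmax},
        maxLik γ c')
    = Real.Gamma ((k : ℝ) / 2) * Real.Gamma (((n : ℝ) - k) / 2) /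
        (Real.pi ^ ((n : ℝ) / 2) * (Sg γ c) ^ ((k : ℝ) / 2) *
          (Stot c - Sg γ c) ^ (((n : ℝ) - k) / 2)) *
        ((Real.log (σmax / σmin)) ^ 2)⁻¹ := by
  subst hγ
  have hk : (0 : ℝ) < #γ := by exact_mod_cast hk1
  have hnk : (0 : ℝ) < n - #γ := sub_pos.2 (by exact_mod_cast (by lia : #γ < n))
  have hI' : 0 < Sg γ c := (div_pos_iff_of_pos_right hk).1 (h0.trans_le hI.1)
  have hN' : 0 < Stot c - Sg γ c := (div_pos_iff_of_pos_right hnk).1 (h0.trans_le hN.1)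
  simpa only [Set.mem_Icc, and_assoc, sq] using stmt_9_general γ c hI' hN' h0 hσ h0 hσ
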